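/- On a para-Sasaki-like Riemannian manifold (M,φ,ξ,η,g) with generalized symmetric metric connection ∇̄, the Lie-derivative-type tensors of g along ξ satisfy (L̄_ξ g)(x,y) = (L_ξ g)(x,y) − 2α g(φx,φy) − 2β g(φx,y) for all vector fields x,y, where (L_ξ g)(x,y) = g(∇_x ξ,y) + g(x,∇_y ξ) = 2g(x,φy) and (L̄_ξ g)(x,y) = g(∇̄_x ξ,y) + g(x,∇̄_y ξ). -/

import Mathlib

/-- Abstract algebraic model of an almost paracontact almost paracomplex
Riemannian (apapR) manifold of dimension `2 n + 1`.  Here `R` plays the role of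
the commutative ring of smooth functions `C^∞(M)` and `V` the `R`-module of
vector fields.  `act x f` is the derivative `x(f)` of a function along a vector
field, `bracket` is the Lie bracket, `g` the Riemannian metric, `(phi, xi, eta)`
the almost paracontact almost paracomplex structure, `nab` the Levi-Civita
connection of `g` and `e` a (local) orthonormal frame with `e 0 = xi`. -/
structure ApapR (R V : Type*) [CommRing R] [Algebra ℝ R]
    [AddCommGroup V] [Module R V] where
  n : ℕ
  act : V → R → R
  bracket : V → V → V
  g : V → V → R
  phi : V → V
  xi : V
  eta : V → R
  nab : V → V → V
  e : Fin (2 * n + 1) → V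
  act_addl : ∀ x y f, act (x + y) f = act x f + act y f
  act_smull : ∀ (h : R) (x : V) f, act (h • x) f = h * act x f
  act_addr : ∀ x f h, act x (f + h) = act x f + act x h
  act_mul : ∀ x f h, act x (f * h) = f * act x h + h * act x f
  g_symm : ∀ x y, g x y = g y x
  g_addl : ∀ x y z, g (x + y) z = g x z + g y z
  g_smull : ∀ (f : R) x y, g (f • x) y = f * g x y
  phi_add : ∀ x y, phi (x + y) = phi x + phi y
  phi_smul : ∀ (f : R) x, phi (f • x) = f • phi x
  eta_eq : ∀ x, eta x = g x xi
  -- apapR structure axioms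
  eta_xi : eta xi = 1
  phi_phi : ∀ x, phi (phi x) = x - eta x • xi
  phi_xi : phi xi = 0
  g_phi_phi : ∀ x y, g (phi x) (phi y) = g x y - eta x * eta y
  -- orthonormal frame, `tr φ = 0`
  e_zero : e 0 = xi
  e_orthonormal : ∀ i j, g (e i) (e j) = if i = j then 1 else 0
  trace_phi : (∑ i, g (phi (e i)) (e i)) = 0
  -- Levi-Civita connection axioms
  nab_addl : ∀ x y z, nab (x + y) z = nab x z + nab y z
  nab_smull : ∀ (f : R) x y, nab (f • x) y = f • nab x y
  nab_addr : ∀ x y z, nab x (y + z) = nab x y + nab x z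
  nab_leibniz : ∀ x (f : R) y, nab x (f • y) = f • nab x y + act x f • y
  nab_metric : ∀ x y z, act x (g y z) = g (nab x y) z + g y (nab x z)
  nab_torsion : ∀ x y, nab x y - nab y x = bracket x y

namespace ApapR

variable {R V : Type*} [CommRing R] [Algebra ℝ R] [AddCommGroup V] [Module R V]

/-- The para-Sasaki-like condition `(∇_x φ)y = −g(x,y)ξ − η(y)x + 2η(x)η(y)ξ`. -/
def IsParaSasakiLike (S : ApapR R V) : Prop :=
  ∀ x y, S.nab x (S.phi y) - S.phi (S.nab x y)
    = -(S.g x y • S.xi) - S.eta y • x + (2 * S.eta x * S.eta y) • S.xi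

/-- The generalized symmetric metric connection
`∇̄_x y = ∇_x y + α{g(x,y)ξ − η(y)x} + β{g(φx,y)ξ − η(y)φx}`. -/
def gsmc (S : ApapR R V) (α β : R) (x y : V) : V :=
  S.nab x y + (α * S.g x y) • S.xi - (α * S.eta y) • x
    + (β * S.g (S.phi x) y) • S.xi - (β * S.eta y) • S.phi x

/-- Curvature tensor of a connection `D`:
`R_D(x,y)z = D_x D_y z − D_y D_x z − D_[x,y] z`. -/
def curv (S : ApapR R V) (D : V → V → V) (x y z : V) : V :=
  D x (D y z) - D y (D x z) - D (S.bracket x y) z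

/-- Ricci tensor of a connection `D` with respect to the orthonormal frame. -/
def ric (S : ApapR R V) (D : V → V → V) (x y : V) : R :=
  ∑ i, S.g (S.curv D (S.e i) x y) (S.e i)

/-- Scalar curvature of a connection `D`. -/
def scal (S : ApapR R V) (D : V → V → V) : R :=
  ∑ i, S.ric D (S.e i) (S.e i)

/-- Divergence of a vector field with respect to a connection `D`. -/
def divg (S : ApapR R V) (D : V → V → V) (x : V) : R :=
  ∑ i, S.g (D (S.e i) x) (S.e i)

/-- The associated metric `g̃(x,y) = g(x,φy) + η(x)η(y)`. -/
def tg (S : ApapR R V) (x y : V) : R := S.g x (S.phi y) + S.eta x * S.eta y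

/-- A function is constant iff all its derivatives vanish. -/
def IsConstant (S : ApapR R V) (f : R) : Prop := ∀ x, S.act x f = 0

end ApapR

namespace ApapR

variable {R V : Type*} [CommRing R] [Algebra ℝ R] [AddCommGroup V] [Module R V]

theorem aux_g_zero (S : ApapR R V) (y : V) : S.g 0 y = 0 := by
  have := S.g_smull 0 0 y
  simpa using this

theorem aux_g_subl (S : ApapR R V) (x y z : V) : S.g (x - y) z = S.g x z - S.g y z := by
  have := S.g_addl (x - y) y z
  rw [sub_add_cancel] at this
  rw [this]; ring

theorem aux_phi_sub (S : ApapR R V) (x y : V) : S.phi (x - y) = S.phi x - S.phi y := by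
  have := S.phi_add (x - y) y
  rw [sub_add_cancel] at this
  rw [this]; abel

theorem aux_g_xi_xi (S : ApapR R V) : S.g S.xi S.xi = 1 := by
  rw [← S.eta_eq, S.eta_xi]

theorem aux_eta_phi (S : ApapR R V) (x : V) : S.eta (S.phi x) = 0 := by
  have h := S.phi_phi (S.phi x)
  rw [S.phi_phi x, aux_phi_sub, S.phi_smul, S.phi_xi, smul_zero, sub_zero] at h
  have h2 : S.eta (S.phi x) • S.xi = 0 := by
    have := sub_eq_self.mp h.symm
    exact this
  have h3 := S.g_smull (S.eta (S.phi x)) S.xi S.xi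
  rw [h2, aux_g_zero, aux_g_xi_xi, mul_one] at h3
  exact h3.symm

theorem aux_phi_symm (S : ApapR R V) (x y : V) : S.g (S.phi x) y = S.g x (S.phi y) := by
  have h := S.g_phi_phi x (S.phi y)
  rw [S.phi_phi y, aux_eta_phi, S.g_symm, aux_g_subl, S.g_smull, S.g_symm S.xi,
    ← S.eta_eq, aux_eta_phi, S.g_symm y] at h
  simpa using h

theorem aux_eta_nab (S : ApapR R V) (x : V) : S.eta (S.nab x S.xi) = 0 := by
  have h := S.nab_metric x S.xi S.xi
  have h1 := S.act_mul x 1 1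
  rw [aux_g_xi_xi, S.g_symm S.xi, ← S.eta_eq] at h
  simp only [one_mul] at h1
  have h0 : S.act x 1 = 0 := left_eq_add.mp h1
  rw [h0] at h
  have h2 : (2 : ℝ) • S.eta (S.nab x S.xi) = 0 := by rw [two_smul]; exact h.symm
  have h3 := congrArg (fun t => (2⁻¹ : ℝ) • t) h2
  simpa [smul_smul] using h3

theorem aux_nab_xi (S : ApapR R V) (hS : S.IsParaSasakiLike) (x : V) :
    S.nab x S.xi = S.phi x := by
  have h := hS x S.xi
  have h0 : S.nab x 0 = 0 := by
    have := S.nab_addr x 0 0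
    rw [add_zero] at this
    exact left_eq_add.mp this
  rw [S.phi_xi, h0, S.eta_xi, ← S.eta_eq] at h
  have h1 : S.phi (S.nab x S.xi) = x - S.eta x • S.xi := by
    have : S.phi (S.nab x S.xi) = -(0 - S.phi (S.nab x S.xi)) := by abel
    rw [this, h]
    module
  have h2 := congrArg S.phi h1
  rw [S.phi_phi, aux_eta_nab, aux_phi_sub, S.phi_smul, S.phi_xi] at h2
  simpa using h2

/-- on a para-Sasaki-like manifold with the generalized symmetric
metric connection, `(L_ξ g)(x,y) = 2g(x,φy)` and
`(L̄_ξ g)(x,y) = (L_ξ g)(x,y) − 2α g(φx,φy) − 2β g(φx,y)`, where the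
Lie-derivative-type tensors are `(L_D g)(x,y) = g(D_x ξ, y) + g(x, D_y ξ)`. -/
theorem lie_xi_gsmc_eq (S : ApapR R V) (hS : S.IsParaSasakiLike) (α β : R)
    (x y : V) :
    (S.g (S.nab x S.xi) y + S.g x (S.nab y S.xi) = 2 * S.g x (S.phi y)) ∧
    (S.g (S.gsmc α β x S.xi) y + S.g x (S.gsmc α β y S.xi)
      = S.g (S.nab x S.xi) y + S.g x (S.nab y S.xi)
        - 2 * α * S.g (S.phi x) (S.phi y) - 2 * β * S.g (S.phi x) y) := by
  have h1 : S.g (S.nab x S.xi) y + S.g x (S.nab y S.xi) = 2 * S.g x (S.phi y) := by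
    rw [aux_nab_xi S hS, aux_nab_xi S hS, aux_phi_symm]; ring
  have key : ∀ u v : V, S.g (S.gsmc α β u S.xi) v
      = S.g (S.nab u S.xi) v + α * S.eta u * S.eta v - α * S.g u v
        - β * S.g (S.phi u) v := by
    intro u v
    unfold gsmc
    rw [← S.eta_eq, ← S.eta_eq, aux_eta_phi, S.eta_xi]
    simp only [aux_g_subl, S.g_addl, S.g_smull]
    rw [S.g_symm S.xi v, ← S.eta_eq]
    ring
  refine ⟨h1, ?_⟩
  rw [S.g_symm x (S.gsmc α β y S.xi), key, key, S.g_symm x (S.nab y S.xi), S.g_phi_phi,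
    S.g_symm y x, aux_phi_symm S y x, S.g_symm y (S.phi x)]
  ring

end ApapR
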